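/- arXiv:1601.04794 — 3 statements merged into one kernel-verified Lean document; each statement's English description precedes it below -/
import Mathlib

section
/- Let X be a real-valued random variable on a probability space (Ω, 𝓕, P) with E[X] = 0, and let δ > 0 be such that E[e^{δ|X|}] < ∞. Then for every real t with |t| ≤ δ, one has E[e^{tX}] ≤ 1 + (t/δ)² · E[e^{δ|X|}], and consequently E[e^{tX}] ≤ exp((t/δ)² · E[e^{δ|X|}]). -/
open MeasureTheory Real

/-!
Every term of order at least `2` in the exponential series of `t x` carries a factor
`|t / δ| ^ k ≤ (t / δ) ^ 2` when compared with the same term of `exp (δ |x|)`, so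
`exp (t x) ≤ 1 + t x + (t / δ) ^ 2 exp (δ |x|)`. Integrating kills the linear term for a centred
random variable.
-/

open ProbabilityTheory
open scoped Nat

theorem norm_exp_smul_sub_sum_le {𝕜 A : Type*} [RCLike 𝕜] [NormedRing A] [NormOneClass A]
    [NormedAlgebra 𝕜 A] [CompleteSpace A] {s : 𝕜} (hs : ‖s‖ ≤ 1) (a : A) (n : ℕ) :
    ‖NormedSpace.exp (s • a) - ∑ k ∈ Finset.range n, (k ! : 𝕜)⁻¹ • (s • a) ^ k‖ ≤
      ‖s‖ ^ n * (exp ‖a‖ - ∑ k ∈ Finset.range n, ‖a‖ ^ k / k !) := by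
  have tail_exp_smul :=
    (hasSum_nat_add_iff' n).mpr (NormedSpace.exp_series_hasSum_exp' (𝕂 := 𝕜) (s • a))
  have tail_exp_norm : HasSum (fun k ↦ ‖a‖ ^ (k + n) / (k + n)!)
      (exp ‖a‖ - ∑ k ∈ Finset.range n, ‖a‖ ^ k / k !) := by
    rw [exp_eq_exp_ℝ]
    exact (hasSum_nat_add_iff' n).mpr (NormedSpace.expSeries_div_hasSum_exp ‖a‖)
  refine tail_exp_smul.norm_le_of_bounded (tail_exp_norm.mul_left (‖s‖ ^ n)) fun k ↦ ?_
  calc ‖((k + n)! : 𝕜)⁻¹ • (s • a) ^ (k + n)‖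
      = ‖(s • a) ^ (k + n)‖ / (k + n)! := by
        rw [norm_smul, norm_inv, RCLike.norm_natCast, inv_mul_eq_div]
    _ ≤ (‖s‖ * ‖a‖) ^ (k + n) / (k + n)! := by
        gcongr
        exact (norm_pow_le _ _).trans_eq (by rw [norm_smul])
    _ = ‖s‖ ^ (k + n) * (‖a‖ ^ (k + n) / (k + n)!) := by rw [mul_pow, mul_div_assoc]
    _ ≤ ‖s‖ ^ n * (‖a‖ ^ (k + n) / (k + n)!) := by
        gcongr ?_ * _
        exact pow_le_pow_of_le_one (norm_nonneg s) hs (Nat.le_add_left n k)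

theorem exp_mul_le_one_add_add_sq_mul_exp_abs {s : ℝ} (hs : |s| ≤ 1) (y : ℝ) :
    exp (s * y) ≤ 1 + s * y + s ^ 2 * exp |y| := by
  have remainder_le : |exp (s * y) - (1 + s * y)| ≤ s ^ 2 * (exp |y| - (1 + |y|)) := by
    simpa [Finset.sum_range_succ, ← exp_eq_exp_ℝ] using
      norm_exp_smul_sub_sum_le (s := s) hs y 2
  have drop_low_order : s ^ 2 * (exp |y| - (1 + |y|)) ≤ s ^ 2 * exp |y| := by
    gcongr
    linarith [abs_nonneg y]
  linarith [le_abs_self (exp (s * y) - (1 + s * y))]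

theorem exp_mul_le_one_add_add_div_sq_mul_exp_mul_abs {t δ : ℝ} (hδ : 0 < δ) (ht : |t| ≤ δ)
    (x : ℝ) : exp (t * x) ≤ 1 + t * x + (t / δ) ^ 2 * exp (δ * |x|) := by
  have ratio_le_one : |t / δ| ≤ 1 := by
    rw [abs_div, abs_of_pos hδ]
    exact div_le_one_of_le₀ ht hδ.le
  simpa only [← mul_assoc, div_mul_cancel₀ t hδ.ne', abs_mul, abs_of_pos hδ] using
    exp_mul_le_one_add_add_sq_mul_exp_abs ratio_le_one (δ * x)

section Moments

variable {Ω : Type*} [MeasurableSpace Ω] {μ : Measure Ω} {X : Ω → ℝ} {t δ : ℝ}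

theorem integrable_exp_mul_of_integrable_exp_mul_abs (hX : AEMeasurable X μ)
    (hexp : Integrable (fun ω ↦ exp (δ * |X ω|)) μ) (ht : |t| ≤ δ) :
    Integrable (fun ω ↦ exp (t * X ω)) μ := by
  refine hexp.mono' (by fun_prop) (ae_of_all μ fun ω ↦ ?_)
  rw [norm_of_nonneg (exp_nonneg _), exp_le_exp]
  calc t * X ω ≤ |t| * |X ω| := (le_abs_self _).trans_eq (abs_mul t (X ω))
    _ ≤ δ * |X ω| := by gcongr

theorem mgf_le_add_div_sq_mul_mgf_abs [IsFiniteMeasure μ] (hX : Integrable X μ) (hδ : 0 < δ)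
    (hexp : Integrable (fun ω ↦ exp (δ * |X ω|)) μ) (ht : |t| ≤ δ) :
    mgf X μ t ≤ μ.real Set.univ + t * μ[X] + (t / δ) ^ 2 * mgf (fun ω ↦ |X ω|) μ δ := by
  have integrable_affine : Integrable (fun ω ↦ 1 + t * X ω) μ :=
    (integrable_const 1).add (hX.const_mul t)
  have integrable_quadratic : Integrable (fun ω ↦ (t / δ) ^ 2 * exp (δ * |X ω|)) μ :=
    hexp.const_mul _
  calc mgf X μ t
      ≤ ∫ ω, (1 + t * X ω + (t / δ) ^ 2 * exp (δ * |X ω|)) ∂μ :=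
        integral_mono (integrable_exp_mul_of_integrable_exp_mul_abs hX.aemeasurable hexp ht)
          (integrable_affine.add integrable_quadratic)
          fun ω ↦ exp_mul_le_one_add_add_div_sq_mul_exp_mul_abs hδ ht (X ω)
    _ = μ.real Set.univ + t * μ[X] + (t / δ) ^ 2 * mgf (fun ω ↦ |X ω|) μ δ := by
        rw [integral_add integrable_affine integrable_quadratic,
          integral_add (integrable_const 1) (hX.const_mul t), integral_const, integral_const_mul,
          integral_const_mul, smul_eq_mul, mul_one, mgf]

end Moments

/-- **Lemma (Liu/Watanabe)**: if `E[X] = 0` and `E[exp (δ|X|)] < ∞` for some `δ > 0`,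
then for every `t` with `|t| ≤ δ`,
`E[exp (t X)] ≤ 1 + (t/δ)² E[exp (δ|X|)] ≤ exp ((t/δ)² E[exp (δ|X|)])`. -/
theorem stmt_0 {Ω : Type*} [MeasurableSpace Ω] (μ : Measure Ω) [IsProbabilityMeasure μ]
    (X : Ω → ℝ) (hX : Measurable X)
    (hXint : Integrable X μ) (hmean : ∫ ω, X ω ∂μ = 0)
    (δ : ℝ) (hδ : 0 < δ)
    (hexp : Integrable (fun ω => Real.exp (δ * |X ω|)) μ)
    (t : ℝ) (ht : |t| ≤ δ) :
    (∫ ω, Real.exp (t * X ω) ∂μ)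
        ≤ 1 + (t / δ) ^ 2 * ∫ ω, Real.exp (δ * |X ω|) ∂μ ∧
    (∫ ω, Real.exp (t * X ω) ∂μ)
        ≤ Real.exp ((t / δ) ^ 2 * ∫ ω, Real.exp (δ * |X ω|) ∂μ) := by
  have mgf_le : (∫ ω, Real.exp (t * X ω) ∂μ)
      ≤ 1 + (t / δ) ^ 2 * ∫ ω, Real.exp (δ * |X ω|) ∂μ := by
    simpa only [mgf, hmean, mul_zero, add_zero, probReal_univ] using
      mgf_le_add_div_sq_mul_mgf_abs hXint hδ hexp ht
  exact ⟨mgf_le, mgf_le.trans ((add_comm _ _).trans_le (add_one_le_exp _))⟩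
end

section
/- Fix indices i < l ≤ M and constants L ≥ 0, N > 0. Suppose there is a Borel measurable function f : ℝ^i → ℝ such that E[X_l | 𝓕_i] = f(X_1, …, X_i) almost surely, and such that for all (x_1, …, x_i) ∈ ℝ^i, |f(x_1, …, x_{i−1}, x_i) − f(x_1, …, x_{i−1}, 0)| ≤ L·|x_i|/N. Then almost surely |E[X_l | 𝓕_i] − E[X_l | 𝓕_{i−1}]| ≤ L·|X_i|/N + L·E[|X_i| | 𝓕_{i−1}]/N. -/
open MeasureTheory

/-- `natFiltration X j` is the σ-algebra generated by `X 1, …, X j`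
(the trivial σ-algebra for `j = 0`). -/
noncomputable def natFiltration {Ω : Type*} (X : ℕ → Ω → ℝ) (j : ℕ) :
    MeasurableSpace Ω :=
  ⨆ k : Fin j, MeasurableSpace.comap (X (↑k + 1)) inferInstance

/-! Replacing `X_i` by a constant in `f (X_1, …, X_i)` gives an `𝓕_{i-1}`-measurable variable `g`
which is within `D = L|X_i|/N` of `Y = E[X_l | 𝓕_i]`. Conditioning `Y - g` on `𝓕_{i-1}` fixes `g`,
so `E[X_l | 𝓕_{i-1}] = E[Y | 𝓕_{i-1}]` is within `E[D | 𝓕_{i-1}]` of `g`, and the two estimates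
add. -/

section ConditionalExpectation

variable {Ω E : Type*} [NormedAddCommGroup E] [NormedSpace ℝ E] [CompleteSpace E]
  {m m₀ : MeasurableSpace Ω} {μ : Measure Ω} {Y g : Ω → E} {D : Ω → ℝ}

theorem norm_condExp_sub_le_condExp (hm : m ≤ m₀) [SigmaFinite (μ.trim hm)]
    (hY : Integrable Y μ) (hD : Integrable D μ) (hg : AEStronglyMeasurable[m] g μ)
    (hYg : ∀ᵐ ω ∂μ, ‖Y ω - g ω‖ ≤ D ω) :
    ∀ᵐ ω ∂μ, ‖(μ[Y | m]) ω - g ω‖ ≤ (μ[D | m]) ω := by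
  have hsub : Integrable (Y - g) μ := hD.mono' (hY.1.sub (hg.mono hm)) hYg
  have hg_int : Integrable g μ := by simpa using hY.sub hsub
  filter_upwards [condExp_sub hY hg_int m, condExp_of_aestronglyMeasurable' hm hg hg_int,
    norm_condExp_le (m := m) (Y - g), condExp_mono (m := m) hsub.norm hD hYg]
    with ω h_sub h_self h_jensen h_mono
  calc ‖(μ[Y | m]) ω - g ω‖ = ‖(μ[Y - g | m]) ω‖ := by rw [h_sub, Pi.sub_apply, h_self]
    _ ≤ (μ[fun ω ↦ ‖(Y - g) ω‖ | m]) ω := h_jensen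
    _ ≤ (μ[D | m]) ω := h_mono

theorem norm_sub_condExp_le_add_condExp (hm : m ≤ m₀) [SigmaFinite (μ.trim hm)]
    (hY : Integrable Y μ) (hD : Integrable D μ) (hg : AEStronglyMeasurable[m] g μ)
    (hYg : ∀ᵐ ω ∂μ, ‖Y ω - g ω‖ ≤ D ω) :
    ∀ᵐ ω ∂μ, ‖Y ω - (μ[Y | m]) ω‖ ≤ D ω + (μ[D | m]) ω := by
  filter_upwards [hYg, norm_condExp_sub_le_condExp hm hY hD hg hYg] with ω h h_condExp
  rw [norm_sub_rev] at h_condExp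
  exact (norm_sub_le_norm_sub_add_norm_sub _ _ _).trans (add_le_add h h_condExp)

theorem condExp_const_mul_div_const (c d : ℝ) (D : Ω → ℝ) (m : MeasurableSpace Ω) :
    μ[fun ω ↦ c * D ω / d | m] =ᵐ[μ] fun ω ↦ c * (μ[D | m]) ω / d := by
  simp only [mul_div_right_comm]
  exact condExp_smul (c / d) D m

end ConditionalExpectation

section NatFiltration

variable {Ω : Type*} {X : ℕ → Ω → ℝ}

theorem natFiltration_mono : Monotone (natFiltration X) := fun _ _ hjn ↦
  iSup_le fun k ↦ le_iSup_of_le (Fin.castLE hjn k) le_rfl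

theorem natFiltration_le [m₀ : MeasurableSpace Ω] (hX : ∀ k, Measurable (X k)) (n : ℕ) :
    natFiltration X n ≤ m₀ :=
  iSup_le fun _ ↦ (hX _).comap_le

theorem measurable_natFiltration {n : ℕ} (k : Fin n) :
    Measurable[natFiltration X n] (X (k + 1)) :=
  (comap_measurable _).mono (le_iSup_of_le k le_rfl) le_rfl

theorem measurable_natFiltration_update_last (n : ℕ) (a : ℝ) :
    Measurable[natFiltration X n] fun ω ↦
      Function.update (fun k : Fin (n + 1) ↦ X (k + 1) ω) (Fin.last n) a := by
  refine @measurable_pi_lambda _ _ _ (natFiltration X n) _ _ fun k ↦ ?_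
  induction k using Fin.lastCases with
  | last => simp only [Function.update_self, measurable_const]
  | cast k =>
    simp only [Function.update_of_ne (Fin.castSucc_ne_last k), Fin.val_castSucc]
    exact measurable_natFiltration k

end NatFiltration

theorem stmt_1_general {Ω E : Type*} [NormedAddCommGroup E] [NormedSpace ℝ E] [CompleteSpace E]
    [MeasurableSpace Ω] {μ : Measure Ω} {X : ℕ → Ω → ℝ} (hX : ∀ k, Measurable (X k)) {n : ℕ}
    [SigmaFinite (μ.trim (natFiltration_le hX n))]
    {Z : Ω → E} {f : (Fin (n + 1) → ℝ) → E} (hf : StronglyMeasurable f)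
    (hZ : μ[Z | natFiltration X (n + 1)] =ᵐ[μ] fun ω ↦ f fun k ↦ X (k + 1) ω)
    {w : ℝ → ℝ} (hw : Integrable (fun ω ↦ w (X (n + 1) ω)) μ) {a : ℝ}
    (hfw : ∀ x, ‖f x - f (Function.update x (Fin.last n) a)‖ ≤ w (x (Fin.last n))) :
    ∀ᵐ ω ∂μ, ‖(μ[Z | natFiltration X (n + 1)]) ω - (μ[Z | natFiltration X n]) ω‖
      ≤ w (X (n + 1) ω) + (μ[fun ω' ↦ w (X (n + 1) ω') | natFiltration X n]) ω := by
  have hclose : ∀ᵐ ω ∂μ, ‖(μ[Z | natFiltration X (n + 1)]) ω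
      - f (Function.update (fun k : Fin (n + 1) ↦ X (k + 1) ω) (Fin.last n) a)‖
        ≤ w (X (n + 1) ω) := by
    filter_upwards [hZ] with ω hω
    rw [hω]
    exact hfw _
  have hmeas : StronglyMeasurable[natFiltration X n] fun ω ↦
      f (Function.update (fun k : Fin (n + 1) ↦ X (k + 1) ω) (Fin.last n) a) :=
    hf.comp_measurable (measurable_natFiltration_update_last n a)
  have hmono : natFiltration X n ≤ natFiltration X (n + 1) := natFiltration_mono n.le_succ
  have : SigmaFinite (μ.trim (natFiltration_le hX (n + 1))) := sigmaFiniteTrim_mono _ hmono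
  filter_upwards [norm_sub_condExp_le_add_condExp (natFiltration_le hX n) integrable_condExp hw
      hmeas.aestronglyMeasurable hclose,
    condExp_condExp_of_le (f := Z) hmono (natFiltration_le hX (n + 1))]
    with ω h h_tower
  rwa [h_tower] at h

/-- If `E[X_l | 𝓕_i] = f (X_1, …, X_i)` a.s. for a measurable `f` whose dependence on the
last coordinate is `(L/N)`-Lipschitz at `0`, then a.s.
`|E[X_l | 𝓕_i] − E[X_l | 𝓕_{i−1}]| ≤ L|X_i|/N + L·E[|X_i| | 𝓕_{i−1}]/N`. -/
theorem stmt_1 {Ω : Type*} [MeasurableSpace Ω] (μ : Measure Ω) [IsProbabilityMeasure μ]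
    (M : ℕ) (X : ℕ → Ω → ℝ)
    (hmeas : ∀ i, Measurable (X i)) (hint : ∀ i, Integrable (X i) μ)
    (L N : ℝ) (hL : 0 ≤ L) (hN : 0 < N)
    (i l : ℕ) (hi : 1 ≤ i) (hil : i < l) (hlM : l ≤ M)
    (f : (Fin i → ℝ) → ℝ) (hfmeas : Measurable f)
    (hf : μ[X l | natFiltration X i] =ᵐ[μ] fun ω => f fun k => X (↑k + 1) ω)
    (hLip : ∀ x : Fin i → ℝ,
      |f x - f (Function.update x ⟨i - 1, by omega⟩ 0)| ≤ L * |x ⟨i - 1, by omega⟩| / N) :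
    ∀ᵐ ω ∂μ,
      |(μ[X l | natFiltration X i]) ω - (μ[X l | natFiltration X (i - 1)]) ω|
        ≤ L * |X i ω| / N
          + L * (μ[fun ω' => |X i ω'| | natFiltration X (i - 1)]) ω / N := by
  obtain ⟨n, rfl⟩ := Nat.exists_eq_add_of_le' hi
  filter_upwards [stmt_1_general hmeas hfmeas.stronglyMeasurable hf (w := fun t ↦ L * |t| / N)
      (((hint (n + 1)).abs.const_mul L).div_const N) hLip,
    condExp_const_mul_div_const L N (fun ω ↦ |X (n + 1) ω|) (natFiltration X n)] with ω h h_pull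
  rwa [h_pull] at h
end

section
/- Let K ≥ 2 be an integer, let D ⊆ ℝ² be open, and let u : D → ℝ be differentiable with 0 < u(x, z) < 1/2 and 1 − u(x, z) − x/2 > 0 for all (x, z) ∈ D. Suppose u satisfies the implicit equation z = (2(1 − u^K)/(K·u^{K−1})) · ln((1 − u − x/2)/(1 − 2u)) at every point of D. Then u solves the K-SAT partial differential equation (1 − x/2 − u) · (K·u^{K−1}/(1 − u^K)) · ∂u/∂x − ∂u/∂z = 0 on D; moreover, at any point of D with z = 0 one has u(x, 0) = x/2. -/
/-!
Writing `f` for the coefficient `t ↦ K t ^ (K - 1) / (1 - t ^ K)`, the equation says that `u` is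
constant along the characteristics `dx/dz = -(1 - u - x/2) f(u)`. On such a curve `1 - u - x/2`
grows exponentially at rate `f(u)/2`, so the one issued from `(2u, 0)`, where `u = x/2`, reaches
the abscissa `x` at `z = (2 / f(u)) log ((1 - u - x/2) / (1 - 2u))`, which is the implicit relation
`z = T(x, u)`. Conversely, differentiating `z = T(x, u)` gives `0 = T_x + T_u u_x` and
`1 = T_u u_z`, whence `u_x + T_x u_z = 0`, and `T_x = -1 / ((1 - u - x/2) f(u))`.
-/

open Filter Topology

section ImplicitRelation

variable {𝕜 : Type*} [NontriviallyNormedField 𝕜]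

theorem fderiv_add_mul_fderiv_eq_zero_of_implicit {u T : 𝕜 × 𝕜 → 𝕜} {p : 𝕜 × 𝕜} {Tx : 𝕜}
    (hu : DifferentiableAt 𝕜 u p) (hT : DifferentiableAt 𝕜 T (p.1, u p))
    (hTx : HasDerivAt (fun x ↦ T (x, u p)) Tx p.1)
    (himp : ∀ᶠ q in 𝓝 p, q.2 = T (q.1, u q)) :
    fderiv 𝕜 u p (1, 0) + Tx * fderiv 𝕜 u p (0, 1) = 0 := by
  set dT := fderiv 𝕜 T (p.1, u p)
  have hTx_eq : Tx = dT (1, 0) :=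
    hTx.unique <| hT.hasFDerivAt.comp_hasDerivAt p.1
      ((hasDerivAt_id p.1).prodMk (hasDerivAt_const p.1 (u p)))
  have chain_rule (v : 𝕜 × 𝕜) : v.2 = dT (v.1, fderiv 𝕜 u p v) := by
    have hcomp : HasFDerivAt (fun q : 𝕜 × 𝕜 ↦ T (q.1, u q))
        (dT.comp ((ContinuousLinearMap.fst 𝕜 𝕜 𝕜).prod (fderiv 𝕜 u p))) p :=
      hT.hasFDerivAt.comp p (hasFDerivAt_fst.prodMk hu.hasFDerivAt)
    exact DFunLike.congr_fun (hasFDerivAt_snd.unique (hcomp.congr_of_eventuallyEq himp)) v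
  have dT_apply (a b : 𝕜) : dT (a, b) = a * dT (1, 0) + b * dT (0, 1) := by
    rw [← smul_eq_mul, ← smul_eq_mul, ← map_smul, ← map_smul, ← map_add]
    simp
  have along_x : 0 = dT (1, 0) + fderiv 𝕜 u p (1, 0) * dT (0, 1) := by
    simpa only [dT_apply 1 (fderiv 𝕜 u p (1, 0)), one_mul] using chain_rule (1, 0)
  have along_z : 1 = fderiv 𝕜 u p (0, 1) * dT (0, 1) := by
    simpa only [dT_apply 0 (fderiv 𝕜 u p (0, 1)), zero_mul, zero_add] using chain_rule (0, 1)
  rw [hTx_eq]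
  linear_combination fderiv 𝕜 u p (1, 0) * along_z - fderiv 𝕜 u p (0, 1) * along_x

end ImplicitRelation

section CharacteristicTime

/-- The value of `z` at which the characteristic of `(1 - x/2 - u) f(u) u_x - u_z = 0` carrying the
value `u = q.2` from the point `(2 * q.2, 0)` reaches the abscissa `x = q.1`. -/
noncomputable def characteristicTime (f : ℝ → ℝ) (q : ℝ × ℝ) : ℝ :=
  2 / f q.2 * Real.log ((1 - q.2 - q.1 / 2) / (1 - 2 * q.2))

variable {f : ℝ → ℝ} {x t : ℝ}

theorem differentiableAt_characteristicTime (hf : DifferentiableAt ℝ f t) (hft : f t ≠ 0)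
    (hx : 1 - t - x / 2 ≠ 0) (ht : 1 - 2 * t ≠ 0) :
    DifferentiableAt ℝ (characteristicTime f) (x, t) := by
  have hcoeff : DifferentiableAt ℝ (fun q : ℝ × ℝ ↦ 2 / f q.2) (x, t) := by
    fun_prop (disch := exact hft)
  have hratio : DifferentiableAt ℝ
      (fun q : ℝ × ℝ ↦ (1 - q.2 - q.1 / 2) / (1 - 2 * q.2)) (x, t) := by
    fun_prop (disch := exact ht)
  exact hcoeff.fun_mul (hratio.log (div_ne_zero hx ht))

theorem hasDerivAt_characteristicTime_left (hx : 1 - t - x / 2 ≠ 0) (ht : 1 - 2 * t ≠ 0) :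
    HasDerivAt (fun s ↦ characteristicTime f (s, t)) (-((1 - t - x / 2) * f t)⁻¹) x := by
  have hratio : HasDerivAt (fun s ↦ (1 - t - s / 2) / (1 - 2 * t)) (-(1 / 2) / (1 - 2 * t)) x :=
    (((hasDerivAt_id x).div_const 2).const_sub (1 - t)).div_const (1 - 2 * t)
  refine ((hratio.log (div_ne_zero hx ht)).const_mul (2 / f t)).congr_deriv ?_
  rw [div_div_div_cancel_right₀ ht, mul_inv]
  ring

theorem characteristicTime_eq_zero_iff (hft : f t ≠ 0) (hx : 0 < 1 - t - x / 2) (ht : t < 1 / 2) :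
    characteristicTime f (x, t) = 0 ↔ t = x / 2 := by
  have ht_pos : 0 < 1 - 2 * t := by linarith
  have hlog : Real.log ((1 - t - x / 2) / (1 - 2 * t)) = 0 ↔ t = x / 2 := by
    rw [Real.log_div hx.ne' ht_pos.ne', sub_eq_zero, Real.log_injOn_pos.eq_iff hx ht_pos]
    constructor <;> intro h <;> linarith
  simp only [characteristicTime, mul_eq_zero, div_eq_zero_iff, two_ne_zero, hft, or_self,
    false_or, hlog]

theorem pde_of_eventually_eq_characteristicTime {u : ℝ × ℝ → ℝ} {p : ℝ × ℝ}
    (hu : DifferentiableAt ℝ u p) (hf : DifferentiableAt ℝ f (u p)) (hfu : f (u p) ≠ 0)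
    (hx : 1 - u p - p.1 / 2 ≠ 0) (ht : 1 - 2 * u p ≠ 0)
    (himp : ∀ᶠ q in 𝓝 p, q.2 = characteristicTime f (q.1, u q)) :
    (1 - p.1 / 2 - u p) * f (u p) * fderiv ℝ u p (1, 0) - fderiv ℝ u p (0, 1) = 0 := by
  have transport := fderiv_add_mul_fderiv_eq_zero_of_implicit hu
    (differentiableAt_characteristicTime hf hfu hx ht)
    (hasDerivAt_characteristicTime_left hx ht) himp
  have hspeed := mul_inv_cancel₀ (mul_ne_zero hx hfu)
  linear_combination (1 - u p - p.1 / 2) * f (u p) * transport + fderiv ℝ u p (0, 1) * hspeed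

end CharacteristicTime

section KSat

/-- The coefficient `f(u) = K u ^ (K - 1) / (1 - u ^ K)` of the K-SAT equation
`(1 - x/2 - u) f(u) u_x - u_z = 0`. -/
noncomputable def ksatCoeff (K : ℕ) (t : ℝ) : ℝ :=
  K * t ^ (K - 1) / (1 - t ^ K)

variable {K : ℕ} {t : ℝ}

theorem ksatCoeff_pos (hK : K ≠ 0) (ht0 : 0 < t) (ht1 : t < 1) : 0 < ksatCoeff K t :=
  div_pos (by positivity) (sub_pos.2 (pow_lt_one₀ ht0.le ht1 hK))

theorem differentiableAt_ksatCoeff (ht : t ^ K ≠ 1) : DifferentiableAt ℝ (ksatCoeff K) t :=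
  .fun_div (by fun_prop) (by fun_prop) (sub_ne_zero.2 ht.symm)

end KSat

theorem stmt_16_general (f : ℝ → ℝ) (D : Set (ℝ × ℝ)) (hD : IsOpen D)
    (u : ℝ × ℝ → ℝ) (hdiff : ∀ p ∈ D, DifferentiableAt ℝ u p)
    (hf : ∀ p ∈ D, DifferentiableAt ℝ f (u p)) (hfu : ∀ p ∈ D, f (u p) ≠ 0)
    (huhalf : ∀ p ∈ D, u p < 1 / 2) (hux : ∀ p ∈ D, 0 < 1 - u p - p.1 / 2)
    (heq : ∀ p ∈ D, p.2 = characteristicTime f (p.1, u p)) :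
    (∀ p ∈ D,
      (1 - p.1 / 2 - u p) * f (u p) * fderiv ℝ u p (1, 0) - fderiv ℝ u p (0, 1) = 0) ∧
    ∀ p ∈ D, p.2 = 0 → u p = p.1 / 2 := by
  refine ⟨fun p hp ↦ ?_, fun p hp hz ↦ ?_⟩
  · have ht : 1 - 2 * u p ≠ 0 := by linarith [huhalf p hp]
    exact pde_of_eventually_eq_characteristicTime (hdiff p hp) (hf p hp) (hfu p hp)
      (hux p hp).ne' ht (eventually_of_mem (hD.mem_nhds hp) heq)
  · exact (characteristicTime_eq_zero_iff (hfu p hp) (hux p hp) (huhalf p hp)).1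
      ((heq p hp).symm.trans hz)

/-- If a differentiable function `u(x, z)` on an open set `D ⊆ ℝ²`, with
`0 < u < 1/2` and `1 − u − x/2 > 0` on `D`, satisfies the implicit equation
`z = (2(1 − u^K)/(K u^{K−1})) ln((1 − u − x/2)/(1 − 2u))` on `D`, then it solves the
K-SAT PDE `(1 − x/2 − u)·(K u^{K−1}/(1 − u^K))·∂u/∂x − ∂u/∂z = 0` on `D`, and
`u(x, 0) = x/2` at every point of `D` with `z = 0`.  Here `∂u/∂x` and `∂u/∂z` are the
directional derivatives `fderiv ℝ u p (1, 0)` and `fderiv ℝ u p (0, 1)`. -/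
theorem stmt_16 (K : ℕ) (hK : 2 ≤ K) (D : Set (ℝ × ℝ)) (hD : IsOpen D)
    (u : ℝ × ℝ → ℝ) (hdiff : ∀ p ∈ D, DifferentiableAt ℝ u p)
    (hu0 : ∀ p ∈ D, 0 < u p) (huhalf : ∀ p ∈ D, u p < 1 / 2)
    (hux : ∀ p ∈ D, 0 < 1 - u p - p.1 / 2)
    (heq : ∀ p ∈ D,
      p.2 = (2 * (1 - u p ^ K) / (K * u p ^ (K - 1))) *
        Real.log ((1 - u p - p.1 / 2) / (1 - 2 * u p))) :
    (∀ p ∈ D,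
      (1 - p.1 / 2 - u p) * (K * u p ^ (K - 1) / (1 - u p ^ K)) * fderiv ℝ u p (1, 0)
        - fderiv ℝ u p (0, 1) = 0) ∧
    ∀ p ∈ D, p.2 = 0 → u p = p.1 / 2 := by
  have hK0 : K ≠ 0 := by lia
  have hu1 (p) (hp : p ∈ D) : u p < 1 := by linarith [huhalf p hp]
  exact stmt_16_general (ksatCoeff K) D hD u hdiff
    (fun p hp ↦ differentiableAt_ksatCoeff (pow_lt_one₀ (hu0 p hp).le (hu1 p hp) hK0).ne)
    (fun p hp ↦ (ksatCoeff_pos hK0 (hu0 p hp) (hu1 p hp)).ne') huhalf hux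
    (by simpa only [characteristicTime, ksatCoeff, div_div_eq_mul_div] using heq)
end
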